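/- arXiv:2003.08304 — 2 statements merged into one kernel-verified Lean document; each statement's English description precedes it below -/
import Mathlib

section
/- Let T₁,...,T_N be i.i.d. shifted exponential with rate λ_s, shift c, T_n one of them, T_N(K) the K-th order statistic, T_D > c a fixed deadline. Then P(T_n < t, T_n ≤ T_D, T_n ≤ T_N(K)) for c < t ≤ T_D equals (1/N)·Σ_{h=1}^K [1 - Z_h - Σ_{j=0}^{h-1} B_{h,j}·(e^{-λ_s(t-c)U_{h,j}} - e^{-λ_s U_{h,j}(T_D-c)})/U_{h,j}], where B_{h,j} = h·binom(N,h)·binom(h-1,j)·(-1)^j, U_{h,j} = N-h+1+j, and Z_h = Σ_{i=0}^{h-1} B_{h,i}·e^{-λ_s U_{h,i}(T_D-c)}/U_{h,i}. -/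
open MeasureTheory ProbabilityTheory Real

/-- The shifted exponential distribution with rate `l` and shift `c`:
density `l * exp (-l*(t-c))` for `t > c`, `0` otherwise. -/
noncomputable def shiftedExp (l c : ℝ) : MeasureTheory.Measure ℝ :=
  MeasureTheory.volume.withDensity
    (fun t => ENNReal.ofReal (if c < t then l * Real.exp (-l * (t - c)) else 0))

/-- The `K`-th order statistic (K-th smallest value) of the family `T` evaluated at `ω`. -/
noncomputable def orderStat {Ω : Type*} {N : ℕ} (T : Fin N → Ω → ℝ) (K : ℕ) (ω : Ω) : ℝ :=
  sInf {x : ℝ | K ≤ Nat.card {i : Fin N // T i ω ≤ x}}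

/-!
Since the common law is atomless, almost surely there are no ties, and then some `T i < t` has rank
`h` exactly when at least `h` of the times lie below `t`. By exchangeability this `i` is the given
`n` with probability `1 / N`, and the number of times below `t` is binomial. As a function of the
survival probability at `t`, the binomial tail is an incomplete beta integral, because the
derivative of a partial sum of Bernstein polynomials telescopes; expanding the integrand gives the
coefficients `B h j / U h j`. The deadline does not matter for `t ≤ TD`: the terms in `TD` inside
the sum add up to `Z h`.
-/

/-- The number of entries of the family `v` strictly below `x`. For an injective `v`, the value
`countBelow v (v i)` is the zero-based rank of `v i`, so that `v i` is the `(k + 1)`-st order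
statistic iff `countBelow v (v i) = k`. -/
noncomputable def countBelow {ι α : Type*} [LT α] (v : ι → α) (x : α) : ℕ :=
  {i | v i < x}.ncard

section Rank

variable {ι α : Type*}

theorem countBelow_comp_equiv [LT α] (v : ι → α) (e : Equiv.Perm ι) (x : α) :
    countBelow (v ∘ e) x = countBelow v x :=
  Set.ncard_preimage_of_injective_subset_range (s := {i | v i < x}) e.injective (by simp)

theorem countBelow_apply_lt [Finite ι] [Preorder α] {v : ι → α} {i : ι} {x : α} (hi : v i < x) :
    countBelow v (v i) < countBelow v x :=
  Set.ncard_lt_ncard (Set.ssubset_iff_of_subset (fun _ hj ↦ lt_trans hj hi) |>.2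
    ⟨i, hi, lt_irrefl (v i)⟩)

theorem countBelow_apply_injective [Finite ι] [LinearOrder α] {v : ι → α}
    (hv : Function.Injective v) : Function.Injective fun i ↦ countBelow v (v i) := by
  intro i j hij
  by_contra hne
  rcases lt_or_gt_of_ne (hv.ne hne) with h | h
  · exact (countBelow_apply_lt h).ne hij
  · exact (countBelow_apply_lt h).ne' hij

theorem exists_countBelow_apply_eq_iff [Finite ι] [LinearOrder α] {v : ι → α}
    (hv : Function.Injective v) {x : α} {k : ℕ} :
    (∃ i, v i < x ∧ countBelow v (v i) = k) ↔ k < countBelow v x := by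
  constructor
  · rintro ⟨i, hi, rfl⟩
    exact countBelow_apply_lt hi
  · -- The ranks of the entries below `x` are distinct numbers less than their count.
    have himage : (fun i ↦ countBelow v (v i)) '' {i | v i < x} = Set.Iio (countBelow v x) := by
      refine Set.eq_of_subset_of_ncard_le ?_ ?_
      · rintro _ ⟨i, hi, rfl⟩
        exact countBelow_apply_lt hi
      · rw [Set.ncard_Iio_nat, Set.ncard_image_of_injective _ (countBelow_apply_injective hv)]
        rfl
    exact fun hk ↦ himage.ge hk

variable [Countable ι] [LinearOrder α] [TopologicalSpace α] [OrderClosedTopology α]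
  [SecondCountableTopology α] [MeasurableSpace α] [OpensMeasurableSpace α]

theorem measurable_countBelow {Ω : Type*} [MeasurableSpace Ω] {v : Ω → ι → α} {x : Ω → α}
    (hv : Measurable v) (hx : Measurable x) :
    Measurable fun ω ↦ countBelow (v ω) (x ω) :=
  measurable_ncard.comp <| measurable_set_iff.2 fun i ↦
    measurable_mem.2 (measurableSet_lt ((measurable_pi_apply i).comp hv) hx)

theorem measurableSet_apply_lt_and_countBelow_apply_eq (n : ι) (x : α) (k : ℕ) :
    MeasurableSet {v : ι → α | v n < x ∧ countBelow v (v n) = k} :=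
  (measurableSet_lt (measurable_pi_apply n) measurable_const).inter
    (measurable_countBelow measurable_id (measurable_pi_apply n) (measurableSet_singleton k))

end Rank

open scoped Topology in
theorem le_orderStat_iff {Ω : Type*} {N K : ℕ} (hK : 1 ≤ K) (hKN : K ≤ N) (T : Fin N → Ω → ℝ)
    (ω : Ω) (y : ℝ) : y ≤ orderStat T K ω ↔ countBelow (fun i ↦ T i ω) y < K := by
  have hbdd : BddBelow {x : ℝ | K ≤ Nat.card {i // T i ω ≤ x}} := by
    obtain ⟨b, hb⟩ := (Set.finite_range fun i ↦ T i ω).bddBelow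
    refine ⟨b, fun x hx ↦ ?_⟩
    obtain ⟨i, hi⟩ := (Nat.card_pos_iff.1 (hK.trans hx)).1
    exact (hb ⟨i, rfl⟩).trans hi
  have hne : {x : ℝ | K ≤ Nat.card {i // T i ω ≤ x}}.Nonempty := by
    obtain ⟨b, hb⟩ := (Set.finite_range fun i ↦ T i ω).bddAbove
    have hall (i : Fin N) : T i ω ≤ b := hb ⟨i, rfl⟩
    exact ⟨b, by simpa [hall] using hKN⟩
  rw [orderStat, le_csInf_iff hbdd hne, countBelow]
  refine ⟨fun h ↦ ?_, fun h x hx ↦ ?_⟩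
  · -- Just to the left of `y`, the number of entries `≤ x` is already the number of entries `< y`.
    obtain ⟨x, hx, hxy⟩ : ∃ x, (∀ i, T i ω < y → T i ω ≤ x) ∧ x < y := by
      refine Filter.Eventually.exists (f := 𝓝[<] y)
        ((Filter.eventually_all.2 fun i ↦ ?_).and self_mem_nhdsWithin)
      by_cases hi : T i ω < y
      · filter_upwards [Ioo_mem_nhdsLT hi] with x hx using fun _ ↦ hx.1.le
      · exact .of_forall fun _ h ↦ absurd h hi
    by_contra! hcard
    exact (h x (hcard.trans (Set.ncard_le_ncard hx))).not_gt hxy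
  · by_contra! hxy
    exact (hx.trans (Set.ncard_le_ncard fun i hi ↦ lt_of_le_of_lt hi hxy)).not_gt h

section Exchangeability

variable {ι α : Type*} [Fintype ι] [MeasurableSpace α]

theorem measurePreserving_comp_perm (μ : Measure α) [SigmaFinite μ] (e : Equiv.Perm ι) :
    MeasurePreserving (fun v : ι → α ↦ v ∘ e) (Measure.pi fun _ ↦ μ) (Measure.pi fun _ ↦ μ) :=
  measurePreserving_arrowCongr' (fun _ ↦ μ) (fun _ ↦ μ) e.symm (.refl α) fun _ ↦ .id μ

theorem ae_injective_pi [MeasurableEq α] (μ : ι → Measure α) [∀ i, IsProbabilityMeasure (μ i)]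
    [∀ i, NullSingletonClass (μ i)] : ∀ᵐ v ∂Measure.pi μ, Function.Injective v := by
  have hne (i j : ι) (hij : i ≠ j) : ∀ᵐ v ∂Measure.pi μ, v i ≠ v j := by
    have hindep : (fun v : ι → α ↦ v i) ⟂ᵢ[Measure.pi μ] fun v ↦ v j :=
      (iIndepFun_pi fun _ ↦ aemeasurable_id).indepFun hij
    have hlaw := (indepFun_iff_map_prod_eq_prod_map_map (measurable_pi_apply i).aemeasurable
      (measurable_pi_apply j).aemeasurable).1 hindep
    rw [(measurePreserving_eval μ i).map_eq, (measurePreserving_eval μ j).map_eq] at hlaw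
    have hoff : ∀ᵐ p ∂(μ i).prod (μ j), p.1 ≠ p.2 := by
      refine (Measure.ae_prod_iff_ae_ae ?_).2 (.of_forall fun x ↦ ?_)
      · exact (measurableSet_eq_fun measurable_fst measurable_snd).compl
      · filter_upwards [(Set.countable_singleton x).ae_notMem (μ j)] with y hy using Ne.symm hy
    rw [← hlaw] at hoff
    exact ae_of_ae_map (f := fun v : ι → α ↦ (v i, v j)) (by fun_prop) hoff
  have hall : ∀ᵐ v ∂Measure.pi μ, ∀ i j, i ≠ j → v i ≠ v j := by simpa only [ae_all_iff] using hne
  filter_upwards [hall] with v hv i j using not_imp_not.1 (hv i j)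

variable [LinearOrder α] [TopologicalSpace α] [OrderClosedTopology α] [SecondCountableTopology α]
  [OpensMeasurableSpace α] (μ : Measure α) [IsProbabilityMeasure μ]

theorem pi_real_countBelow_apply_eq_congr (m n : ι) (x : α) (k : ℕ) :
    (Measure.pi fun _ : ι ↦ μ).real {v | v m < x ∧ countBelow v (v m) = k}
      = (Measure.pi fun _ : ι ↦ μ).real {v | v n < x ∧ countBelow v (v n) = k} := by
  classical
  rw [← (measurePreserving_comp_perm μ (Equiv.swap m n)).measureReal_preimage
    (measurableSet_apply_lt_and_countBelow_apply_eq m x k).nullMeasurableSet]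
  simp [countBelow_comp_equiv]

variable [NullSingletonClass μ]

theorem pi_real_countBelow_apply_eq (n : ι) (x : α) (k : ℕ) :
    (Measure.pi fun _ : ι ↦ μ).real {v | v n < x ∧ countBelow v (v n) = k}
      = (1 / Fintype.card ι) * (Measure.pi fun _ : ι ↦ μ).real {v | k < countBelow v x} := by
  have : Nonempty ι := ⟨n⟩
  let rankEvent (i : ι) : Set (ι → α) := {v | v i < x ∧ countBelow v (v i) = k}
  have hunion : ⋃ i ∈ Finset.univ, rankEvent i =ᵐ[Measure.pi fun _ ↦ μ]
      {v | k < countBelow v x} := by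
    filter_upwards [ae_injective_pi fun _ : ι ↦ μ] with v hv
    refine propext (Iff.trans ?_ (exists_countBelow_apply_eq_iff hv))
    simp only [Finset.mem_univ, Set.iUnion_true]
    exact Set.mem_iUnion
  have hdisj (i j : ι) (hij : i ≠ j) :
      AEDisjoint (Measure.pi fun _ ↦ μ) (rankEvent i) (rankEvent j) :=
    measure_mono_null
      (fun v hv hinj ↦ hij (countBelow_apply_injective hinj (hv.1.2.trans hv.2.2.symm)))
      (ae_injective_pi fun _ ↦ μ)
  rw [← measureReal_congr hunion, measureReal_biUnion_finset₀ (fun i _ j _ ↦ hdisj i j)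
    fun i _ ↦ (measurableSet_apply_lt_and_countBelow_apply_eq i x k).nullMeasurableSet,
    Finset.sum_congr rfl fun i _ ↦ pi_real_countBelow_apply_eq_congr μ i n x k]
  simp

theorem pi_real_countBelow_apply_lt (n : ι) (x : α) (K : ℕ) :
    (Measure.pi fun _ : ι ↦ μ).real {v | v n < x ∧ countBelow v (v n) < K}
      = (1 / Fintype.card ι)
        * ∑ k ∈ Finset.range K, (Measure.pi fun _ : ι ↦ μ).real {v | k < countBelow v x} := by
  have hunion : {v : ι → α | v n < x ∧ countBelow v (v n) < K}
      = ⋃ k ∈ Finset.range K, {v | v n < x ∧ countBelow v (v n) = k} := by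
    ext v
    simp
  rw [hunion, measureReal_biUnion_finset, Finset.mul_sum]
  · exact Finset.sum_congr rfl fun k _ ↦ pi_real_countBelow_apply_eq μ n x k
  · exact fun k _ k' _ hne ↦ Set.disjoint_left.2 fun v hv hv' ↦ hne (hv.2.symm.trans hv'.2)
  · exact fun k _ ↦ measurableSet_apply_lt_and_countBelow_apply_eq n x k

end Exchangeability

section Binomial

open scoped unitInterval

variable {ι α : Type*} [Fintype ι] [MeasurableSpace α] (μ : Measure α) [IsProbabilityMeasure μ]

theorem map_mem_eq_smul_dirac_add_smul_dirac {A : Set α} (hA : MeasurableSet A) {p : I}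
    (hp : μ.real A = p) :
    μ.map (· ∈ A) = unitInterval.toNNReal p • Measure.dirac True
      + unitInterval.toNNReal (σ p) • Measure.dirac False := by
  have hmem : Measurable (· ∈ A) := measurable_mem.2 hA
  have := Measure.isProbabilityMeasure_map (μ := μ) hmem.aemeasurable
  refine Measure.ext_of_measureReal_singleton fun q ↦ ?_
  rw [map_measureReal_apply hmem (measurableSet_singleton q)]
  by_cases hq : q
  · have hpre : (· ∈ A) ⁻¹' {q} = A := by ext x; simp [hq]
    rw [hpre, hp]
    simp [measureReal_def, hq]
  · have hpre : (· ∈ A) ⁻¹' {q} = Aᶜ := by ext x; simp [hq]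
    rw [hpre, probReal_compl_eq_one_sub hA, hp]
    simp [measureReal_def, hq]

theorem isSetBernoulli_pi_mem {A : Set α} (hA : MeasurableSet A) {p : I} (hp : μ.real A = p) :
    IsSetBernoulli (fun v : ι → α ↦ {i | v i ∈ A}) Set.univ p (Measure.pi fun _ ↦ μ) := by
  have hmem : Measurable (· ∈ A) := measurable_mem.2 hA
  refine ⟨Measurable.aemeasurable (measurable_set_iff.2 fun i ↦
    measurable_mem.2 (measurable_pi_apply i hA)), ?_⟩
  simp only [setBernoulli_eq_map, Set.mem_univ, ← map_mem_eq_smul_dirac_add_smul_dirac μ hA hp]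
  rw [← Measure.infinitePi_map_pi _ fun _ ↦ hmem, Measure.infinitePi_eq_pi,
    Measure.map_map (by fun_prop) (by fun_prop)]
  rfl

variable [LinearOrder α] [TopologicalSpace α] [OrderClosedTopology α] [OpensMeasurableSpace α]
  (x : α) (k : ℕ)

theorem pi_real_countBelow_eq :
    (Measure.pi fun _ : ι ↦ μ).real {v | countBelow v x = k}
      = (bernsteinPolynomial ℝ (Fintype.card ι) k).eval (μ.real (Set.Iio x)) := by
  have hlaw := isSetBernoulli_pi_mem (ι := ι) μ (measurableSet_Iio (a := x))
    (p := ⟨μ.real (Set.Iio x), measureReal_nonneg, measureReal_le_one⟩) rfl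
  have hcount := map_ncard_setBernoulli_real_singleton (Set.finite_univ (α := ι))
    ⟨μ.real (Set.Iio x), measureReal_nonneg, measureReal_le_one⟩ k
  rw [← hlaw.map_eq, map_measureReal_apply (by fun_prop) (measurableSet_singleton k),
    map_measureReal_apply_of_aemeasurable hlaw.aemeasurable (by measurability)] at hcount
  change (Measure.pi fun _ ↦ μ).real {v | countBelow v x = k} = _ at hcount
  simpa [bernsteinPolynomial, Set.ncard_univ, Nat.card_eq_fintype_card] using hcount

theorem pi_real_lt_countBelow [SecondCountableTopology α] :
    (Measure.pi fun _ : ι ↦ μ).real {v | k < countBelow v x}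
      = 1 - ∑ j ∈ Finset.range (k + 1),
          (bernsteinPolynomial ℝ (Fintype.card ι) j).eval (μ.real (Set.Iio x)) := by
  have hmeas : Measurable fun v : ι → α ↦ countBelow v x :=
    measurable_countBelow measurable_id measurable_const
  have hcompl : {v : ι → α | k < countBelow v x}
      = ((countBelow · x) ⁻¹' (Finset.range (k + 1) : Set ℕ))ᶜ := by
    ext v
    simp
  rw [hcompl, probReal_compl_eq_one_sub (hmeas (Finset.measurableSet _)),
    ← sum_measureReal_preimage_singleton _ fun j _ ↦ hmeas (measurableSet_singleton j)]
  exact congrArg (1 - ·) (Finset.sum_congr rfl fun j _ ↦ pi_real_countBelow_eq μ x j)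

end Binomial

section Bernstein

open Polynomial

theorem derivative_sum_bernsteinPolynomial (R : Type*) [CommRing R] (n k : ℕ) :
    derivative (∑ j ∈ Finset.range (k + 1), bernsteinPolynomial R n j)
      = -(n * bernsteinPolynomial R (n - 1) k) := by
  induction k with
  | zero => simp [bernsteinPolynomial.derivative_zero]
  | succ k ih =>
    rw [Finset.sum_range_succ, derivative_add, ih, bernsteinPolynomial.derivative_succ]
    ring

theorem integral_one_sub_pow_mul_pow (k b : ℕ) (p : ℝ) :
    ∫ y in (0)..p, (1 - y) ^ k * y ^ b
      = ∑ j ∈ Finset.range (k + 1),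
          (k.choose j : ℝ) * (-1) ^ j * p ^ (b + 1 + j) / (b + 1 + j) := by
  have hexpand (y : ℝ) : (1 - y) ^ k * y ^ b
      = ∑ j ∈ Finset.range (k + 1), (k.choose j : ℝ) * (-1) ^ j * y ^ (b + j) := by
    rw [sub_eq_neg_add, add_pow, Finset.sum_mul]
    refine Finset.sum_congr rfl fun j _ ↦ ?_
    rw [neg_pow]
    ring
  simp_rw [hexpand]
  rw [intervalIntegral.integral_finsetSum fun j _ ↦
    Continuous.intervalIntegrable (by fun_prop) _ _]
  refine Finset.sum_congr rfl fun j _ ↦ ?_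
  rw [intervalIntegral.integral_const_mul, integral_pow]
  push_cast
  ring

theorem sum_bernsteinPolynomial_eval_one_sub {n k : ℕ} (hk : k < n) (p : ℝ) :
    ∑ j ∈ Finset.range (k + 1), (bernsteinPolynomial ℝ n j).eval (1 - p)
      = (k + 1) * n.choose (k + 1) * ∑ j ∈ Finset.range (k + 1),
          (k.choose j : ℝ) * (-1) ^ j * p ^ (n - k + j) / (n - k + j : ℕ) := by
  obtain ⟨b, rfl⟩ := Nat.exists_eq_add_of_lt hk
  set S := ∑ j ∈ Finset.range (k + 1), bernsteinPolynomial ℝ (k + b + 1) j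
  have hS0 : S.eval (1 - 0) = 0 := by
    simp only [S, eval_finsetSum, sub_zero, bernsteinPolynomial.eval_at_1]
    exact Finset.sum_eq_zero fun j hj ↦ if_neg (by grind)
  have hderiv (y : ℝ) : HasDerivAt (fun y ↦ S.eval (1 - y))
      ((k + 1) * (k + b + 1).choose (k + 1) * ((1 - y) ^ k * y ^ b)) y := by
    refine ((S.hasDerivAt (1 - y)).comp_const_sub 1 y).congr_deriv ?_
    have hchoose : ((k + b + 1 : ℕ) : ℝ) * (k + b).choose k
        = (k + b + 1).choose (k + 1) * (k + 1) := by
      exact_mod_cast Nat.add_one_mul_choose_eq (k + b) k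
    rw [derivative_sum_bernsteinPolynomial]
    simp only [bernsteinPolynomial, eval_neg, eval_mul, eval_natCast, eval_pow, eval_X, eval_sub,
      eval_one, Nat.add_sub_cancel, Nat.add_sub_cancel_left]
    linear_combination (1 - y) ^ k * y ^ b * hchoose
  have hftc := intervalIntegral.integral_eq_sub_of_hasDerivAt (a := 0) (b := p)
    (fun y _ ↦ hderiv y) (Continuous.intervalIntegrable (by fun_prop) _ _)
  rw [hS0, sub_zero, intervalIntegral.integral_const_mul, integral_one_sub_pow_mul_pow] at hftc
  rw [← eval_finsetSum, ← hftc]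
  have hsub : k + b + 1 - k = b + 1 := by omega
  simp [hsub]

end Bernstein

section ShiftedExp

variable {l c : ℝ}

instance nullSingletonClass_shiftedExp (l c : ℝ) : NullSingletonClass (shiftedExp l c) :=
  nullSingletonClass_withDensity _

theorem shiftedExp_Ici (hl : 0 < l) {x : ℝ} (hx : c ≤ x) :
    shiftedExp l c (Set.Ici x) = ENNReal.ofReal (exp (-l * (x - c))) := by
  have hexp (t : ℝ) : l * exp (-l * (t - c)) = l * exp (l * c) * exp (-l * t) := by
    rw [mul_assoc, ← exp_add]
    ring_nf
  have hint : IntegrableOn (fun t ↦ l * exp (-l * (t - c))) (Set.Ioi x) := by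
    simp only [hexp]
    exact (integrableOn_exp_mul_Ioi (neg_lt_zero.2 hl) x).const_mul _
  have hval : ∫ t in Set.Ioi x, l * exp (-l * (t - c)) = exp (-l * (x - c)) := by
    simp only [hexp]
    rw [integral_const_mul, integral_exp_mul_Ioi (neg_lt_zero.2 hl), neg_div_neg_eq,
      ← mul_div_assoc, ← hexp, mul_div_cancel_left₀ _ hl.ne']
  rw [shiftedExp, withDensity_apply _ measurableSet_Ici, setLIntegral_congr Ioi_ae_eq_Ici.symm,
    ← hval, ofReal_integral_eq_lintegral_ofReal hint (ae_of_all _ fun t ↦ by positivity)]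
  refine setLIntegral_congr_fun measurableSet_Ioi fun t ht ↦ ?_
  simp only [if_pos (hx.trans_lt ht)]

theorem shiftedExp_Iio_self (l c : ℝ) : shiftedExp l c (Set.Iio c) = 0 := by
  rw [shiftedExp, withDensity_apply _ measurableSet_Iio]
  refine setLIntegral_eq_zero measurableSet_Iio fun t ht ↦ ?_
  simp [(Set.mem_Iio.1 ht).not_gt]

theorem isProbabilityMeasure_shiftedExp (hl : 0 < l) (c : ℝ) :
    IsProbabilityMeasure (shiftedExp l c) := by
  refine ⟨?_⟩
  rw [← measure_add_measure_compl (measurableSet_Iio (a := c)), shiftedExp_Iio_self, Set.compl_Iio,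
    shiftedExp_Ici hl le_rfl]
  simp

theorem shiftedExp_real_Ici_rpow (hl : 0 < l) {x : ℝ} (hx : c ≤ x) (u : ℝ) :
    (shiftedExp l c).real (Set.Ici x) ^ u = exp (-l * (x - c) * u) := by
  rw [measureReal_def, shiftedExp_Ici hl hx, ENNReal.toReal_ofReal (exp_pos _).le, ← exp_mul]

end ShiftedExp

theorem pi_real_countBelow_apply_lt_eq_sum {ι α : Type*} [Fintype ι] [LinearOrder α]
    [TopologicalSpace α] [OrderClosedTopology α] [SecondCountableTopology α] [MeasurableSpace α]
    [OpensMeasurableSpace α] (μ : Measure α) [IsProbabilityMeasure μ] [NullSingletonClass μ]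
    {K : ℕ} (hK : K ≤ Fintype.card ι) (n : ι) (x : α) :
    (Measure.pi fun _ : ι ↦ μ).real {v | v n < x ∧ countBelow v (v n) < K}
      = (1 / Fintype.card ι) * ∑ k ∈ Finset.range K,
          (1 - (k + 1) * (Fintype.card ι).choose (k + 1) * ∑ j ∈ Finset.range (k + 1),
            (k.choose j : ℝ) * (-1) ^ j * μ.real (Set.Ici x) ^ (Fintype.card ι - k + j)
              / (Fintype.card ι - k + j : ℕ)) := by
  rw [pi_real_countBelow_apply_lt]
  congr! 2 with k hk
  rw [pi_real_lt_countBelow, ← Set.compl_Ici, probReal_compl_eq_one_sub measurableSet_Ici,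
    sum_bernsteinPolynomial_eval_one_sub ((Finset.mem_range.1 hk).trans_le hK)]

theorem prob_success_before_t_general
    {Ω : Type*} [MeasurableSpace Ω] (P : Measure Ω) {N K : ℕ} (hK : 1 ≤ K) (hKN : K ≤ N)
    (μ : Measure ℝ) [IsProbabilityMeasure μ] [NullSingletonClass μ] {TD t : ℝ} (htTD : t ≤ TD)
    (T : Fin N → Ω → ℝ) (n : Fin N)
    (hlaw : P.map (fun ω i ↦ T i ω) = Measure.pi fun _ : Fin N ↦ μ)
    (B : ℕ → ℕ → ℝ)
    (hB : ∀ h j, B h j = (h : ℝ) * (N.choose h : ℝ) * ((h - 1).choose j : ℝ) * (-1) ^ j)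
    (U : ℕ → ℕ → ℝ) (hU : ∀ h j, U h j = (N : ℝ) - h + 1 + j)
    (Z : ℕ → ℝ)
    (hZ : ∀ h, Z h = ∑ i ∈ Finset.range h, B h i * μ.real (Set.Ici TD) ^ U h i / U h i) :
    P.real {ω | T n ω < t ∧ T n ω ≤ TD ∧ T n ω ≤ orderStat T K ω}
      = (1 / (N : ℝ)) * ∑ h ∈ Finset.Icc 1 K,
          (1 - Z h - ∑ j ∈ Finset.range h,
            B h j * (μ.real (Set.Ici t) ^ U h j - μ.real (Set.Ici TD) ^ U h j) / U h j) := by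
  have hT : AEMeasurable (fun ω i ↦ T i ω) P :=
    .of_map_ne_zero (hlaw ▸ IsProbabilityMeasure.ne_zero _)
  have hevent : {ω | T n ω < t ∧ T n ω ≤ TD ∧ T n ω ≤ orderStat T K ω} = (fun ω i ↦ T i ω) ⁻¹'
      {v | v n < t ∧ countBelow v (v n) < K} := by
    ext ω
    simp only [Set.mem_ofPred_eq, Set.mem_preimage, le_orderStat_iff hK hKN]
    exact and_congr_right fun h ↦ and_iff_right (h.le.trans htTD)
  have hmeas : MeasurableSet {v : Fin N → ℝ | v n < t ∧ countBelow v (v n) < K} :=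
    (measurableSet_lt (measurable_pi_apply n) measurable_const).inter
      (measurable_countBelow measurable_id (measurable_pi_apply n) measurableSet_Iio)
  rw [hevent, ← map_measureReal_apply_of_aemeasurable hT hmeas, hlaw,
    pi_real_countBelow_apply_lt_eq_sum μ (by simpa using hKN), Fintype.card_fin,
    ← Finset.Ico_add_one_right_eq_Icc, Finset.sum_Ico_eq_sum_range, Nat.add_sub_cancel]
  congr! 2 with k hk
  rw [add_comm 1 k, hZ, sub_sub, ← Finset.sum_add_distrib, Finset.mul_sum]
  congr! 2 with j
  have hU' : U (k + 1) j = (N - k + j : ℕ) := by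
    rw [hU]
    push_cast [Nat.cast_sub ((Finset.mem_range.1 hk).le.trans hKN)]
    ring
  rw [hB, Nat.add_sub_cancel, hU', Real.rpow_natCast, Real.rpow_natCast, Nat.cast_succ]
  ring

theorem prob_success_before_t
    {Ω : Type*} [MeasurableSpace Ω] (P : MeasureTheory.Measure Ω) [IsProbabilityMeasure P]
    (N K : ℕ) (hK : 1 ≤ K) (hKN : K ≤ N)
    (l c TD t : ℝ) (hl : 0 < l) (hc : 0 ≤ c) (ht : c < t) (htTD : t ≤ TD)
    (T : Fin N → Ω → ℝ) (hT : ∀ i, Measurable (T i)) (n : Fin N)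
    (hlaw : MeasureTheory.Measure.map (fun ω i => T i ω) P
      = MeasureTheory.Measure.pi (fun _ : Fin N => shiftedExp l c))
    (B : ℕ → ℕ → ℝ)
    (hB : ∀ h j, B h j = (h : ℝ) * (N.choose h : ℝ) * ((h - 1).choose j : ℝ) * (-1) ^ j)
    (U : ℕ → ℕ → ℝ) (hU : ∀ h j, U h j = (N : ℝ) - h + 1 + j)
    (Z : ℕ → ℝ)
    (hZ : ∀ h, Z h = ∑ i ∈ Finset.range h, B h i * Real.exp (-l * U h i * (TD - c)) / U h i) :
    (P {ω | T n ω < t ∧ T n ω ≤ TD ∧ T n ω ≤ orderStat T K ω}).toReal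
      = (1 / (N : ℝ)) * ∑ h ∈ Finset.Icc 1 K,
          (1 - Z h - ∑ j ∈ Finset.range h,
            B h j * (Real.exp (-l * (t - c) * U h j) - Real.exp (-l * U h j * (TD - c))) / U h j) := by
  have := isProbabilityMeasure_shiftedExp hl c
  have hpow (x : ℝ) (hx : c ≤ x) := shiftedExp_real_Ici_rpow hl hx
  have hcomm (x u : ℝ) : -l * u * (x - c) = -l * (x - c) * u := mul_right_comm _ _ _
  simp only [hcomm, ← hpow t ht.le, ← hpow TD (ht.le.trans htTD)] at hZ ⊢
  exact prob_success_before_t_general P hK hKN _ htTD T n hlaw B hB U hU Z hZ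
end

section
/- Let T_D be shifted exponential with rate λ_d > 0, shift c ≥ 0, independent of T_N(K) (K-th order statistic of N i.i.d. shifted exponentials with rate λ_s, shift c). Then the conditional second moment satisfies E[T_N(K)² | T_N(K) ≤ T_D] = (1/R_K)·Σ_{j=0}^{K-1} B_{K,j}·λ_s·(c²H_{K,j}² + 2cH_{K,j} + 2)/H_{K,j}³, where B_{K,j} = K·binom(N,K)·binom(K-1,j)·(-1)^j, H_{K,j} = λ_s(N-K+1+j) + λ_d, and R_K = P(T_N(K) ≤ T_D). -/
open MeasureTheory ProbabilityTheory Real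

/-!
The number of samples that are at most `t` is binomial, so the cdf of the `K`-th order statistic is
`bernsteinTail N K` evaluated at the common cdf `F`. The derivative of this polynomial telescopes to
a single Bernstein polynomial, which gives the density `N * b_{N-1,K-1}(F t) * f t`, where `f` is
the derivative of `F`. By independence, restricting to the event that the deadline has not passed
multiplies this density by the survival function of the deadline. For exponential laws
`F t = 1 - exp (-λ_s (t - c))`, and expanding `F ^ (K - 1)` binomially turns the product into a
finite combination of exponentials, against which `t ^ 2` is integrated term by term.
-/

section BernsteinTail

open Polynomial

/-- The tail sum of Bernstein polynomials of degree `n`: at `p ∈ [0, 1]` it is the probability that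
at least `k` of `n` independent events of probability `p` occur. -/
noncomputable def bernsteinTail (R : Type*) [CommRing R] (n k : ℕ) : R[X] :=
  ∑ m ∈ Finset.Ico k (n + 1), bernsteinPolynomial R n m

variable {R : Type*} [CommRing R]

theorem bernsteinTail_eval_zero (n : ℕ) {k : ℕ} (hk : 1 ≤ k) :
    (bernsteinTail R n k).eval 0 = 0 := by
  rw [bernsteinTail, eval_finsetSum]
  refine Finset.sum_eq_zero fun m hm => ?_
  rw [bernsteinPolynomial.eval_at_0,
    if_neg (Nat.one_le_iff_ne_zero.1 (hk.trans (Finset.mem_Ico.1 hm).1))]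

theorem derivative_bernsteinTail {n k : ℕ} (hk : 1 ≤ k) (hkn : k ≤ n) :
    derivative (bernsteinTail R n k) = n * bernsteinPolynomial R (n - 1) (k - 1) := by
  obtain ⟨k, rfl⟩ := Nat.exists_eq_add_of_le' hk
  have htelescope := Finset.sum_Ico_sub (fun m => -bernsteinPolynomial R (n - 1) m)
    (Nat.le_of_lt hkn)
  simp only [neg_sub_neg, bernsteinPolynomial.eq_zero_of_lt R (by omega : n - 1 < n),
    neg_zero, zero_sub, neg_neg] at htelescope
  rw [bernsteinTail, ← Finset.sum_Ico_add' _ k n 1, derivative_sum]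
  simp only [bernsteinPolynomial.derivative_succ, ← Finset.mul_sum, htelescope,
    Nat.add_sub_cancel]

theorem measurable_setOf_mem {ι α : Type*} [MeasurableSpace α] {A : Set α}
    (hA : MeasurableSet A) : Measurable fun t : ι → α => {i | t i ∈ A} :=
  measurable_set_iff.2 fun i => measurableSet_setOfPred.1 (measurable_pi_apply i hA)

theorem map_setOf_mem_pi {ι α : Type*} [Fintype ι] [MeasurableSpace α] (ν : Measure α)
    [IsProbabilityMeasure ν] {A : Set α} (hA : MeasurableSet A) :
    (Measure.pi fun _ : ι => ν).map (fun t => {i | t i ∈ A}) =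
      setBernoulli Set.univ ⟨ν.real A, measureReal_nonneg, measureReal_le_one⟩ := by
  classical
  have hmeas := measurable_setOf_mem (ι := ι) hA
  have := Measure.isProbabilityMeasure_map (μ := Measure.pi fun _ : ι => ν) hmeas.aemeasurable
  refine Measure.ext_of_measureReal_singleton fun s => ?_
  have hbox : (fun t : ι → α => {i | t i ∈ A}) ⁻¹' {s} =
      Set.univ.pi fun i => if i ∈ s then A else Aᶜ := by
    ext t
    simp only [Set.mem_preimage, Set.mem_singleton_iff, Set.ext_iff, Set.mem_ofPred_eq,
      Set.mem_univ_pi]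
    refine forall_congr' fun i => ?_
    by_cases hi : i ∈ s <;> simp [hi]
  rw [map_measureReal_apply hmeas (measurableSet_singleton s), hbox,
    setBernoulli_real_singleton _ s.subset_univ Set.finite_univ, measureReal_def, Measure.pi_pi,
    ENNReal.toReal_prod]
  simp only [apply_ite (fun B => (ν B).toReal), ← measureReal_def, probReal_compl_eq_one_sub hA]
  have hcompl : Finset.univ.filter (· ∉ s) = sᶜ.toFinset := by ext; simp
  rw [Finset.prod_ite, Finset.prod_const, Finset.prod_const, Set.filter_mem_univ_eq_toFinset,
    hcompl, ← Set.compl_eq_univ_sdiff, Set.ncard_eq_toFinset_card', Set.ncard_eq_toFinset_card']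

theorem pi_real_setOf_le_card {ι α : Type*} [Fintype ι] [MeasurableSpace α] (ν : Measure α)
    [IsProbabilityMeasure ν] {A : Set α} (hA : MeasurableSet A) (k : ℕ) :
    (Measure.pi fun _ : ι => ν).real {t | k ≤ Nat.card {i // t i ∈ A}} =
      (bernsteinTail ℝ (Fintype.card ι) k).eval (ν.real A) := by
  have hmeas := measurable_setOf_mem (ι := ι) hA
  have hpreimage : {t : ι → α | k ≤ Nat.card {i // t i ∈ A}} =
      (fun t : ι → α => {i | t i ∈ A}) ⁻¹'
        (Set.ncard ⁻¹' (Finset.Ico k (Fintype.card ι + 1))) := by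
    ext t
    have hle : {i | t i ∈ A}.ncard ≤ Fintype.card ι :=
      Nat.card_eq_fintype_card (α := ι) ▸ Set.ncard_le_card _
    change k ≤ {i | t i ∈ A}.ncard ↔ {i | t i ∈ A}.ncard ∈ (Finset.Ico k _ : Set ℕ)
    simp [hle]
  rw [hpreimage, ← map_measureReal_apply hmeas (Set.toFinite _).measurableSet,
    map_setOf_mem_pi ν hA, ← map_measureReal_apply (by fun_prop) (Finset.measurableSet _),
    ← sum_measureReal_singleton]
  simp [map_ncard_setBernoulli_real_singleton, Set.finite_univ, Set.ncard_univ, bernsteinTail,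
    eval_finsetSum, bernsteinPolynomial]

end BernsteinTail

section OrderStat

variable {N K : ℕ}

theorem le_card_subtype_iff_exists_finset {ι : Type*} [Finite ι] {p : ι → Prop} {k : ℕ} :
    k ≤ Nat.card {i // p i} ↔ ∃ s : Finset ι, k ≤ s.card ∧ ∀ i ∈ s, p i := by
  classical
  have := Fintype.ofFinite ι
  rw [Nat.card_eq_fintype_card, Fintype.card_subtype]
  exact ⟨fun h => ⟨_, h, by simp⟩,
    fun ⟨s, hs, hp⟩ => hs.trans (Finset.card_le_card fun i hi => by simpa using hp i hi)⟩

theorem isClosed_setOf_le_card_le {ι α : Type*} [Finite ι] [TopologicalSpace α]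
    [Preorder α] [ClosedIciTopology α] (v : ι → α) (k : ℕ) :
    IsClosed {x : α | k ≤ Nat.card {i // v i ≤ x}} := by
  have hunion : {x : α | k ≤ Nat.card {i // v i ≤ x}} =
      ⋃ s ∈ {s : Finset ι | k ≤ s.card}, ⋂ i ∈ s, Set.Ici (v i) := by
    ext x
    simp [le_card_subtype_iff_exists_finset]
  rw [hunion]
  exact (Set.toFinite _).isClosed_biUnion fun s _ => isClosed_biInter fun i _ => isClosed_Ici

theorem orderStat_le_iff {Ω : Type*} (hK : 1 ≤ K) (hKN : K ≤ N) (T : Fin N → Ω → ℝ) (ω : Ω)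
    (x : ℝ) : orderStat T K ω ≤ x ↔ K ≤ Nat.card {i : Fin N // T i ω ≤ x} := by
  set S := {x : ℝ | K ≤ Nat.card {i : Fin N // T i ω ≤ x}} with hS
  have hrange := Set.finite_range fun i => T i ω
  have hne : S.Nonempty := by
    obtain ⟨b, hb⟩ := hrange.bddAbove
    have hTb : ∀ i, T i ω ≤ b := fun i => hb ⟨i, rfl⟩
    exact ⟨b, by simpa [hS, hTb] using hKN⟩
  have hbdd : BddBelow S := by
    obtain ⟨b, hb⟩ := hrange.bddBelow
    refine ⟨b, fun y hy => ?_⟩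
    obtain ⟨⟨i, hi⟩⟩ := (Nat.card_pos_iff.1 (hK.trans hy)).1
    exact (hb ⟨i, rfl⟩).trans hi
  have hupper : IsUpperSet S := fun y z hyz hy =>
    hy.trans (Set.ncard_le_ncard (s := {i | T i ω ≤ y}) fun i hi => hi.trans hyz)
  exact ⟨fun h => hupper h ((isClosed_setOf_le_card_le _ K).csInf_mem hne hbdd),
    fun h => csInf_le hbdd h⟩

theorem preimage_orderStat_eval_Iic (hK : 1 ≤ K) (hKN : K ≤ N) (x : ℝ) :
    orderStat (Function.eval : Fin N → (Fin N → ℝ) → ℝ) K ⁻¹' Set.Iic x =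
      {t | K ≤ Nat.card {i // t i ∈ Set.Iic x}} :=
  Set.ext fun t => orderStat_le_iff hK hKN _ t x

theorem measurable_orderStat_eval (hK : 1 ≤ K) (hKN : K ≤ N) :
    Measurable (orderStat (Function.eval : Fin N → (Fin N → ℝ) → ℝ) K) :=
  measurable_of_Iic fun x => by
    rw [preimage_orderStat_eval_Iic hK hKN]
    exact measurable_setOf_mem measurableSet_Iic
      (Set.toFinite {s : Set (Fin N) | K ≤ s.ncard}).measurableSet

theorem cdf_map_orderStat_pi (hK : 1 ≤ K) (hKN : K ≤ N) (ν : Measure ℝ)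
    [IsProbabilityMeasure ν] (x : ℝ) :
    cdf ((Measure.pi fun _ : Fin N => ν).map (orderStat Function.eval K)) x =
      (bernsteinTail ℝ N K).eval (cdf ν x) := by
  have hmeas := measurable_orderStat_eval hK hKN
  have := Measure.isProbabilityMeasure_map (μ := Measure.pi fun _ : Fin N => ν) hmeas.aemeasurable
  rw [cdf_eq_real, map_measureReal_apply hmeas measurableSet_Iic,
    preimage_orderStat_eval_Iic hK hKN, pi_real_setOf_le_card ν measurableSet_Iic, cdf_eq_real,
    Fintype.card_fin]

theorem eq_withDensity_of_hasDerivAt_cdf (μ : Measure ℝ) [IsProbabilityMeasure μ] {a : ℝ}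
    {f : ℝ → ℝ} (ha : cdf μ a = 0) (hf : ∀ x, a < x → HasDerivAt (cdf μ) (f x) x) :
    μ = (volume.restrict (Set.Ioi a)).withDensity fun x => ENNReal.ofReal (f x) := by
  refine Measure.ext_of_Iic _ _ fun x => ?_
  rw [← ofReal_cdf, withDensity_apply _ measurableSet_Iic,
    Measure.restrict_restrict measurableSet_Iic, Set.Iic_inter_Ioi]
  rcases le_or_gt x a with hx | hx
  · have hzero : cdf μ x = 0 := le_antisymm (ha ▸ monotone_cdf μ hx) (cdf_nonneg μ x)
    simp [hzero, Set.Ioc_eq_empty hx.not_gt]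
  · have hnonneg : ∀ y, a < y → 0 ≤ f y := fun y hy =>
      (hf y hy).nonneg_of_monotone (monotone_cdf μ)
    have hcont : ContinuousOn (cdf μ) (Set.Icc a x) := fun y hy => by
      rcases hy.1.eq_or_lt with rfl | hay
      · exact ((cdf μ).right_continuous a).mono Set.Icc_subset_Ici_self
      · exact (hf y hay).continuousAt.continuousWithinAt
    have hint : IntegrableOn f (Set.Ioc a x) :=
      intervalIntegral.integrableOn_deriv_of_nonneg hcont (fun y hy => hf y hy.1)
        fun y hy => hnonneg y hy.1
    rw [← ofReal_integral_eq_lintegral_ofReal hint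
        (ae_restrict_of_forall_mem measurableSet_Ioc fun y hy => hnonneg y hy.1),
      ← intervalIntegral.integral_of_le hx.le,
      intervalIntegral.integral_eq_sub_of_hasDerivAt_of_le hx.le hcont (fun y hy => hf y hy.1)
        ((intervalIntegrable_iff_integrableOn_Ioc_of_le hx.le).2 hint), ha, sub_zero]

theorem map_orderStat_pi_eq_withDensity (hK : 1 ≤ K) (hKN : K ≤ N) (ν : Measure ℝ)
    [IsProbabilityMeasure ν] {a : ℝ} {f : ℝ → ℝ} (ha : cdf ν a = 0)
    (hf : ∀ x, a < x → HasDerivAt (cdf ν) (f x) x) :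
    (Measure.pi fun _ : Fin N => ν).map (orderStat Function.eval K) =
      (volume.restrict (Set.Ioi a)).withDensity fun x => ENNReal.ofReal
        (N * (bernsteinPolynomial ℝ (N - 1) (K - 1)).eval (cdf ν x) * f x) := by
  have := Measure.isProbabilityMeasure_map (μ := Measure.pi fun _ : Fin N => ν)
    (measurable_orderStat_eval hK hKN).aemeasurable
  have hcdf := cdf_map_orderStat_pi hK hKN ν
  refine eq_withDensity_of_hasDerivAt_cdf _ ?_ fun x hx => ?_
  · rw [hcdf, ha, bernsteinTail_eval_zero N hK]
  · rw [funext hcdf]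
    refine (((bernsteinTail ℝ N K).hasDerivAt (cdf ν x)).comp x (hf x hx)).congr_deriv ?_
    rw [derivative_bernsteinTail hK hKN, Polynomial.eval_mul, Polynomial.eval_natCast]

end OrderStat

section ShiftedExp

variable {l c : ℝ}

theorem shiftedExp_eq_withDensity (l c : ℝ) :
    shiftedExp l c = (volume.restrict (Set.Ioi c)).withDensity
      fun t => ENNReal.ofReal (l * exp (-l * (t - c))) := by
  rw [shiftedExp, ← withDensity_indicator measurableSet_Ioi]
  congr 1
  ext t
  by_cases h : c < t <;> simp [h]

theorem shiftedExp_Ioi (hl : 0 < l) {x : ℝ} (hx : c ≤ x) :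
    shiftedExp l c (Set.Ioi x) = ENNReal.ofReal (exp (-l * (x - c))) := by
  have hfactor : ∀ t, l * exp (-l * (t - c)) = l * exp (l * c) * exp (-l * t) := fun t => by
    rw [mul_assoc, ← exp_add]
    ring_nf
  have hl' : -l < 0 := neg_lt_zero.2 hl
  rw [shiftedExp_eq_withDensity, withDensity_apply _ measurableSet_Ioi,
    Measure.restrict_restrict measurableSet_Ioi, Set.Ioi_inter_Ioi, sup_eq_left.2 hx]
  simp only [hfactor]
  rw [← ofReal_integral_eq_lintegral_ofReal ((integrableOn_exp_mul_Ioi hl' x).const_mul _)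
      (ae_of_all _ fun t => by positivity),
    integral_const_mul, integral_exp_mul_Ioi hl', mul_sub, sub_eq_neg_add, exp_add]
  congr 1
  field_simp

theorem cdf_shiftedExp (hl : 0 < l) {x : ℝ} (hx : c ≤ x) :
    cdf (shiftedExp l c) x = 1 - exp (-l * (x - c)) := by
  have := isProbabilityMeasure_shiftedExp hl c
  rw [cdf_eq_real, ← Set.compl_Ioi, probReal_compl_eq_one_sub measurableSet_Ioi, measureReal_def,
    shiftedExp_Ioi hl hx, ENNReal.toReal_ofReal (exp_pos _).le]

theorem hasDerivAt_cdf_shiftedExp (hl : 0 < l) {x : ℝ} (hx : c < x) :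
    HasDerivAt (cdf (shiftedExp l c)) (l * exp (-l * (x - c))) x := by
  have hd : HasDerivAt (fun t => 1 - exp (-l * (t - c))) (l * exp (-l * (x - c))) x :=
    ((((hasDerivAt_id' x).sub_const c).const_mul (-l)).exp.const_sub 1).congr_deriv (by ring)
  exact hd.congr_of_eventuallyEq
    ((eventually_gt_nhds hx).mono fun t ht => cdf_shiftedExp hl (le_of_lt ht))

end ShiftedExp

section ExpMoments

variable {h : ℝ}

theorem integral_Ioi_zero_pow_mul_exp (hh : 0 < h) (n : ℕ) :
    ∫ u in Set.Ioi 0, u ^ n * exp (-h * u) = n.factorial / h ^ (n + 1) := by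
  have hGamma := integral_rpow_mul_exp_neg_mul_Ioi (a := n + 1) (by positivity) hh
  rw [add_sub_cancel_right, Gamma_nat_eq_factorial] at hGamma
  simpa only [rpow_natCast, neg_mul, ← Nat.cast_add_one, one_div, inv_pow, inv_mul_eq_div]
    using hGamma

theorem integrableOn_Ioi_zero_pow_mul_exp (hh : 0 < h) (n : ℕ) :
    IntegrableOn (fun u => u ^ n * exp (-h * u)) (Set.Ioi 0) :=
  .of_integral_ne_zero (by rw [integral_Ioi_zero_pow_mul_exp hh]; positivity)

theorem add_pow_mul_exp_eq_sum (c u : ℝ) (n : ℕ) :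
    (u + c) ^ n * exp (-h * u) =
      ∑ k ∈ Finset.range (n + 1), c ^ (n - k) * n.choose k * (u ^ k * exp (-h * u)) := by
  rw [add_pow, Finset.sum_mul]
  exact Finset.sum_congr rfl fun k _ => by ring

theorem integrableOn_Ioi_pow_mul_exp (hh : 0 < h) (c : ℝ) (n : ℕ) :
    IntegrableOn (fun t => t ^ n * exp (-h * (t - c))) (Set.Ioi c) := by
  rw [← (measurePreserving_add_right volume c).integrableOn_comp_preimage
    (measurableEmbedding_addRight c), Set.preimage_add_const_Ioi, sub_self]
  simp only [Function.comp_def, add_sub_cancel_right, add_pow_mul_exp_eq_sum]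
  exact integrable_finsetSum _ fun k _ => (integrableOn_Ioi_zero_pow_mul_exp hh k).const_mul _

theorem integral_Ioi_pow_mul_exp (hh : 0 < h) (c : ℝ) (n : ℕ) :
    ∫ t in Set.Ioi c, t ^ n * exp (-h * (t - c)) =
      ∑ k ∈ Finset.range (n + 1), c ^ (n - k) * n.choose k * (k.factorial / h ^ (k + 1)) := by
  rw [← (measurePreserving_add_right volume c).setIntegral_preimage_emb
    (measurableEmbedding_addRight c), Set.preimage_add_const_Ioi, sub_self]
  simp only [add_sub_cancel_right, add_pow_mul_exp_eq_sum]
  rw [integral_finsetSum _ fun k _ => (integrableOn_Ioi_zero_pow_mul_exp hh k).const_mul _]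
  simp only [integral_const_mul, integral_Ioi_zero_pow_mul_exp hh]

theorem integral_Ioi_sq_mul_exp (hh : 0 < h) (c : ℝ) :
    ∫ t in Set.Ioi c, t ^ 2 * exp (-h * (t - c)) =
      (c ^ 2 * h ^ 2 + 2 * c * h + 2) / h ^ 3 := by
  rw [integral_Ioi_pow_mul_exp hh]
  simp only [Finset.sum_range_succ, Finset.sum_range_zero, Nat.choose, Nat.factorial]
  push_cast
  field_simp
  ring

end ExpMoments

theorem map_snd_restrict_prod_setOf_le {α : Type*} [LinearOrder α] [TopologicalSpace α]
    [OrderClosedTopology α] [SecondCountableTopology α] [MeasurableSpace α]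
    [OpensMeasurableSpace α] (μ ν : Measure α) [SFinite μ] [SFinite ν] :
    ((μ.prod ν).restrict {z | z.2 ≤ z.1}).map Prod.snd =
      ν.withDensity fun y => μ (Set.Ici y) := by
  have hle : MeasurableSet {z : α × α | z.2 ≤ z.1} := measurableSet_le measurable_snd measurable_fst
  ext S hS
  rw [Measure.map_apply measurable_snd hS, Measure.restrict_apply (measurable_snd hS),
    Measure.prod_apply_symm ((measurable_snd hS).inter hle), withDensity_apply _ hS,
    ← lintegral_indicator hS]
  refine lintegral_congr fun y => ?_
  by_cases hy : y ∈ S <;> simp [hy, Set.Ici, Set.preimage_preimage]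

theorem map_comp_snd_restrict_prod_setOf_le {α β : Type*} [LinearOrder α] [TopologicalSpace α]
    [OrderClosedTopology α] [SecondCountableTopology α] [MeasurableSpace α]
    [OpensMeasurableSpace α] [MeasurableSpace β] (μ : Measure α) (ν : Measure β)
    [SFinite μ] [SFinite ν] {X : β → α} (hX : Measurable X) :
    ((μ.prod ν).restrict {z | X z.2 ≤ z.1}).map (fun z => X z.2) =
      (ν.map X).withDensity fun y => μ (Set.Ici y) := by
  rw [← map_snd_restrict_prod_setOf_le, ← Measure.map_id (μ := μ),
    Measure.map_prod_map _ _ measurable_id hX,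
    Measure.restrict_map (by fun_prop) (measurableSet_le measurable_snd measurable_fst),
    Measure.map_map measurable_snd (by fun_prop), Measure.map_id]
  rfl

section Deadline

/-- The coefficient `B_{K,j}` of the paper: the signed weight of the `j`-th exponential in
`deadlineDensity`. -/
def deadlineCoeff (N K j : ℕ) : ℝ :=
  (K : ℝ) * N.choose K * (K - 1).choose j * (-1) ^ j

/-- The rate `H_{K,j}` of the paper: the decay rate of the `j`-th exponential in `deadlineDensity`.
The subtraction `N - K` is taken in `ℝ`, so it is not truncated. -/
def deadlineRate (N K : ℕ) (ls ld : ℝ) (j : ℕ) : ℝ :=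
  ls * ((N : ℝ) - K + 1 + j) + ld

/-- The density at `t > c`, not normalized, of the `K`-th order statistic of `N` independent shifted
exponentials of rate `ls` on the event that it is at most an independent shifted exponential
deadline of rate `ld`, all with shift `c`. The value for `t ≤ c` has no meaning. -/
noncomputable def deadlineDensity (N K : ℕ) (ls ld c t : ℝ) : ℝ :=
  ∑ j ∈ Finset.range K, deadlineCoeff N K j * ls * exp (-deadlineRate N K ls ld j * (t - c))

variable {N K : ℕ} {ls ld : ℝ}

theorem deadlineRate_pos (hKN : K ≤ N) (hls : 0 ≤ ls) (hld : 0 < ld) (j : ℕ) :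
    0 < deadlineRate N K ls ld j := by
  have : (0 : ℝ) ≤ N - K := sub_nonneg.2 (Nat.cast_le.2 hKN)
  rw [deadlineRate]
  positivity

theorem deadlineDensity_eq_eval_bernsteinPolynomial (hK : 1 ≤ K) (hKN : K ≤ N)
    (ls ld c t : ℝ) :
    deadlineDensity N K ls ld c t =
      N * (bernsteinPolynomial ℝ (N - 1) (K - 1)).eval (1 - exp (-ls * (t - c))) *
        (ls * exp (-ls * (t - c))) * exp (-ld * (t - c)) := by
  obtain ⟨k, rfl⟩ := Nat.exists_eq_add_of_le' hK
  obtain ⟨m, rfl⟩ := Nat.exists_eq_add_of_le hKN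
  have hchoose : ((k + m + 1 : ℕ) : ℝ) * (k + m).choose k =
      (k + 1 : ℕ) * (k + m + 1).choose (k + 1) := by
    exact_mod_cast (Nat.add_one_mul_choose_eq (k + m) k).trans (mul_comm _ _)
  have hexp : ∀ j, exp (-deadlineRate (k + m + 1) (k + 1) ls ld j * (t - c)) =
      exp (-ls * (t - c)) ^ (m + 1 + j) * exp (-ld * (t - c)) := fun j => by
    rw [← exp_nat_mul, ← exp_add, deadlineRate]
    push_cast
    ring_nf
  have hbinom := add_pow (-exp (-ls * (t - c))) 1 k
  rw [neg_add_eq_sub] at hbinom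
  rw [deadlineDensity, bernsteinPolynomial, show k + 1 + m = k + m + 1 by ring]
  simp only [deadlineCoeff, Nat.add_sub_cancel, hexp, Polynomial.eval_mul, Polynomial.eval_pow,
    Polynomial.eval_sub, Polynomial.eval_one, Polynomial.eval_X, Polynomial.eval_natCast,
    sub_sub_cancel, Nat.add_sub_cancel_left, ← mul_assoc, hchoose, hbinom, Finset.mul_sum,
    Finset.sum_mul]
  refine Finset.sum_congr rfl fun j _ => ?_
  rw [neg_pow]
  ring

theorem deadlineDensity_nonneg (hK : 1 ≤ K) (hKN : K ≤ N) (hls : 0 ≤ ls) {c t : ℝ} (ht : c ≤ t) :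
    0 ≤ deadlineDensity N K ls ld c t := by
  have hF : 0 ≤ 1 - exp (-ls * (t - c)) :=
    sub_nonneg.2 (exp_le_one_iff.2 (by nlinarith))
  rw [deadlineDensity_eq_eval_bernsteinPolynomial hK hKN, bernsteinPolynomial]
  simp only [Polynomial.eval_mul, Polynomial.eval_pow, Polynomial.eval_sub,
    Polynomial.eval_one, Polynomial.eval_X, Polynomial.eval_natCast, sub_sub_cancel]
  positivity

theorem integral_sq_mul_deadlineDensity (hKN : K ≤ N) (hls : 0 ≤ ls) (hld : 0 < ld) (c : ℝ) :
    ∫ t in Set.Ioi c, t ^ 2 * deadlineDensity N K ls ld c t =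
      ∑ j ∈ Finset.range K, deadlineCoeff N K j * ls *
        (c ^ 2 * deadlineRate N K ls ld j ^ 2 + 2 * c * deadlineRate N K ls ld j + 2) /
          deadlineRate N K ls ld j ^ 3 := by
  have hrate := deadlineRate_pos hKN hls hld
  simp only [deadlineDensity, Finset.mul_sum, mul_left_comm (_ ^ 2)]
  rw [integral_finsetSum _ fun j _ => (integrableOn_Ioi_pow_mul_exp (hrate j) c 2).const_mul _]
  simp only [integral_const_mul, integral_Ioi_sq_mul_exp (hrate _), mul_div_assoc]

theorem map_orderStat_restrict_le_deadline (hK : 1 ≤ K) (hKN : K ≤ N) (hls : 0 < ls)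
    (hld : 0 < ld) (c : ℝ) :
    (((shiftedExp ld c).prod (Measure.pi fun _ : Fin N => shiftedExp ls c)).restrict
        {z | orderStat Function.eval K z.2 ≤ z.1}).map (fun z => orderStat Function.eval K z.2) =
      (volume.restrict (Set.Ioi c)).withDensity
        fun t => ENNReal.ofReal (deadlineDensity N K ls ld c t) := by
  have := isProbabilityMeasure_shiftedExp hls c
  have := isProbabilityMeasure_shiftedExp hld c
  have hcdf_measurable := (monotone_cdf (shiftedExp ls c)).measurable
  have hsurvival_measurable : Measurable fun t => shiftedExp ld c (Set.Ici t) :=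
    Antitone.measurable fun s t hst => measure_mono (Set.Ici_subset_Ici.2 hst)
  rw [map_comp_snd_restrict_prod_setOf_le _ _ (measurable_orderStat_eval hK hKN),
    map_orderStat_pi_eq_withDensity hK hKN _ (by simp [cdf_shiftedExp hls le_rfl])
      fun x hx => hasDerivAt_cdf_shiftedExp hls hx,
    ← withDensity_mul _ (by fun_prop) hsurvival_measurable]
  refine withDensity_congr_ae (ae_restrict_of_forall_mem measurableSet_Ioi fun t ht => ?_)
  have hct : c ≤ t := le_of_lt ht
  rw [Pi.mul_apply, shiftedExp_Ici hld hct, cdf_shiftedExp hls hct,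
    ← ENNReal.ofReal_mul' (exp_pos _).le,
    ← deadlineDensity_eq_eval_bernsteinPolynomial hK hKN]

theorem setIntegral_orderStat_le_deadline (hK : 1 ≤ K) (hKN : K ≤ N) (hls : 0 < ls)
    (hld : 0 < ld) (c : ℝ) {g : ℝ → ℝ} (hg : Measurable g) :
    ∫ z in {z : ℝ × (Fin N → ℝ) | orderStat Function.eval K z.2 ≤ z.1},
        g (orderStat Function.eval K z.2)
        ∂(shiftedExp ld c).prod (Measure.pi fun _ : Fin N => shiftedExp ls c) =
      ∫ t in Set.Ioi c, g t * deadlineDensity N K ls ld c t := by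
  have hX : Measurable fun z : ℝ × (Fin N → ℝ) => orderStat Function.eval K z.2 :=
    (measurable_orderStat_eval hK hKN).comp measurable_snd
  rw [← integral_map hX.aemeasurable hg.aestronglyMeasurable,
    map_orderStat_restrict_le_deadline hK hKN hls hld, integral_withDensity_eq_integral_toReal_smul
      (by unfold deadlineDensity; fun_prop) (ae_of_all _ fun t => ENNReal.ofReal_lt_top)]
  refine setIntegral_congr_fun measurableSet_Ioi fun t ht => ?_
  rw [ENNReal.toReal_ofReal (deadlineDensity_nonneg hK hKN hls.le (le_of_lt ht)), smul_eq_mul,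
    mul_comm]

end Deadline

theorem cond_second_moment_orderStat_random_deadline_general
    {Ω : Type*} [MeasurableSpace Ω] (P : Measure Ω)
    (N K : ℕ) (hK : 1 ≤ K) (hKN : K ≤ N) (ls ld c : ℝ) (hls : 0 < ls) (hld : 0 < ld)
    (T : Fin N → Ω → ℝ) (D : Ω → ℝ)
    (hlaw : P.map (fun ω => (D ω, fun i => T i ω)) =
      (shiftedExp ld c).prod (Measure.pi fun _ : Fin N => shiftedExp ls c))
    (B : ℕ → ℝ) (hB : ∀ j, B j = (K : ℝ) * (N.choose K : ℝ) * ((K - 1).choose j : ℝ) * (-1) ^ j)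
    (H : ℕ → ℝ) (hH : ∀ j, H j = ls * ((N : ℝ) - K + 1 + j) + ld)
    (R : ℝ) (hR : R = (P {ω | orderStat T K ω ≤ D ω}).toReal) :
    ∫ ω, orderStat T K ω ^ 2 ∂P[|{ω | orderStat T K ω ≤ D ω}] =
      (1 / R) * ∑ j ∈ Finset.range K,
        B j * ls * (c ^ 2 * (H j) ^ 2 + 2 * c * H j + 2) / (H j) ^ 3 := by
  have := isProbabilityMeasure_shiftedExp hls c
  have := isProbabilityMeasure_shiftedExp hld c
  have hjoint : AEMeasurable (fun ω => (D ω, fun i => T i ω)) P :=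
    aemeasurable_of_map_neZero (by rw [hlaw]; infer_instance)
  have hX : Measurable fun z : ℝ × (Fin N → ℝ) => orderStat Function.eval K z.2 :=
    (measurable_orderStat_eval hK hKN).comp measurable_snd
  have hset : ∫ ω in {ω | orderStat T K ω ≤ D ω}, orderStat T K ω ^ 2 ∂P =
      ∫ t in Set.Ioi c, t ^ 2 * deadlineDensity N K ls ld c t := by
    rw [← setIntegral_orderStat_le_deadline hK hKN hls hld c (by fun_prop), ← hlaw,
      setIntegral_map (measurableSet_le hX measurable_fst)
        (hX.pow_const 2).aestronglyMeasurable hjoint]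
    rfl
  rw [ProbabilityTheory.cond, integral_smul_measure, hset,
    integral_sq_mul_deadlineDensity hKN hls.le hld, hR, ENNReal.toReal_inv, one_div, smul_eq_mul]
  simp only [hB, hH, deadlineCoeff, deadlineRate]

theorem cond_second_moment_orderStat_random_deadline
    {Ω : Type*} [MeasurableSpace Ω] (P : MeasureTheory.Measure Ω) [IsProbabilityMeasure P]
    (N K : ℕ) (hK : 1 ≤ K) (hKN : K ≤ N)
    (ls ld c : ℝ) (hls : 0 < ls) (hld : 0 < ld) (hc : 0 ≤ c)
    (T : Fin N → Ω → ℝ) (hT : ∀ i, Measurable (T i))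
    (D : Ω → ℝ) (hD : Measurable D)
    (hlaw : MeasureTheory.Measure.map (fun ω => (D ω, fun i => T i ω)) P
      = (shiftedExp ld c).prod (MeasureTheory.Measure.pi (fun _ : Fin N => shiftedExp ls c)))
    (B : ℕ → ℝ) (hB : ∀ j, B j = (K : ℝ) * (N.choose K : ℝ) * ((K - 1).choose j : ℝ) * (-1) ^ j)
    (H : ℕ → ℝ) (hH : ∀ j, H j = ls * ((N : ℝ) - K + 1 + j) + ld)
    (R : ℝ) (hR : R = (P {ω | orderStat T K ω ≤ D ω}).toReal) :
    (∫ ω, (orderStat T K ω) ^ 2 ∂(P[|{ω | orderStat T K ω ≤ D ω}]))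
      = (1 / R) * ∑ j ∈ Finset.range K,
          B j * ls * (c ^ 2 * (H j) ^ 2 + 2 * c * H j + 2) / (H j) ^ 3 := by
  exact cond_second_moment_orderStat_random_deadline_general P N K hK hKN ls ld c hls hld T D hlaw
    B hB H hH R hR
end
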